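/- Let (q1,p1,q2,p2) be a rational solution of A5^(2)(α0,α1,α2,α3). Then, along the cocompact filter on ℂ (i.e., as |t| → ∞): q1(t) → −2α0+α3, p1(t) → 1/4, q2(t) → −2α1+α3, p2(t) → 1/4, and moreover t·(p1(t) − 1/4) → (−2α1+α3)·(−2α1−α3)/4 and t·(p2(t) − 1/4) → (−2α0+α3)·(−2α0−α3)/4. -/

import Mathlib

open Filter Topology Polynomial

/-- Evaluation of a rational function with complex coefficients at a point,
using its reduced numerator and denominator. -/
noncomputable def evR (f : RatFunc ℂ) (t : ℂ) : ℂ := f.num.eval t / f.denom.eval t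

/-- A rational function has no pole at `c` if its reduced denominator does not vanish at `c`. -/
def NoPoleAt (f : RatFunc ℂ) (c : ℂ) : Prop := f.denom.eval c ≠ 0

/-- `(q1, p1, q2, p2)` is a rational solution of the Sasano system
`A5^(2)(α0, α1, α2, α3)` (the parameter `α2` does not occur in the equations):
the four differential equations hold at every point `t ∈ ℂ` which is not a pole
of any of `q1, p1, q2, p2`. -/
def IsSasanoSol (a0 a1 a3 : ℂ) (q1 p1 q2 p2 : RatFunc ℂ) : Prop :=
  ∀ t : ℂ, NoPoleAt q1 t → NoPoleAt p1 t → NoPoleAt q2 t → NoPoleAt p2 t →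
    (t * deriv (evR q1) t =
      2 * (evR q1 t) ^ 2 * evR p1 t - (evR q1 t) ^ 2 + (a0 + a1 + a3) * evR q1 t
        - t + 4 * t * evR p2 t + 2 * evR q1 t * evR q2 t * evR p2 t) ∧
    (t * deriv (evR p1) t =
      -2 * evR q1 t * (evR p1 t) ^ 2 + 2 * evR q1 t * evR p1 t
        - (a0 + a1 + a3) * evR p1 t + a0 - 2 * evR p1 t * evR q2 t * evR p2 t) ∧
    (t * deriv (evR q2) t =
      2 * (evR q2 t) ^ 2 * evR p2 t - (evR q2 t) ^ 2 + (a0 + a1 + a3) * evR q2 t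
        - t + 4 * t * evR p1 t + 2 * evR q1 t * evR p1 t * evR q2 t) ∧
    (t * deriv (evR p2) t =
      -2 * evR q2 t * (evR p2 t) ^ 2 + 2 * evR q2 t * evR p2 t
        - (a0 + a1 + a3) * evR p2 t + a1 - 2 * evR q1 t * evR p1 t * evR p2 t)

/-!
For rational functions `f` and `g`, either `f = O(g)` or `t g = O(f)` at infinity, and
`t f' = O(f - c)` for every constant `c`. In terms of `w = q1 p1 + q2 p2` and `s = α0 + α1 + α3`,
the system reads

`t q1' = q1 (2 w - q1 + s) + t (4 p2 - 1)`,  `t p1' = p1 (2 q1 - 2 w - s) + α0`,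

together with the same equations with the indices `1, 2` and `α0, α1` exchanged. Comparing growth
excludes `p1 = O(1/t)` and `p2 = O(1/t)`, so dividing the equations for `p1, p2` by `p1, p2` gives
`w - q1 = O(1)` and `w - q2 = O(1)`. An unbounded `q1` would then make the two sides of
`w = q1 p1 + q2 p2` grow at different rates. So `q1, q2, w` are bounded, whence `p1, p2 → 1/4`, and
letting `t → ∞` in the equations, where `t f' → 0`, gives the remaining limits.
-/

open Asymptotics Bornology

section Cancellation

variable {α 𝕜 : Type*} [NormedField 𝕜] {l : Filter α} {f g k : α → 𝕜}

lemma isBigO_of_mul_right (hk : ∀ᶠ x in l, k x ≠ 0)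
    (h : (fun x ↦ f x * k x) =O[l] fun x ↦ g x * k x) : f =O[l] g := by
  refine (h.mul (isBigO_refl (fun x ↦ (k x)⁻¹) l)).congr' ?_ ?_ <;>
  · filter_upwards [hk] with x hx
    exact mul_inv_cancel_right₀ hx _

lemma isBigO_one_of_mul_self (hk : ∀ᶠ x in l, k x ≠ 0) (h : (fun x ↦ f x * k x) =O[l] k) :
    f =O[l] (1 : α → 𝕜) :=
  isBigO_of_mul_right hk (by simpa using h)

lemma eventually_ne_zero_of_one_isBigO (h : (1 : α → 𝕜) =O[l] f) : ∀ᶠ x in l, f x ≠ 0 :=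
  h.eq_zero_imp.mono fun _ hx h0 ↦ one_ne_zero (hx h0)

end Cancellation

section Cobounded

variable {𝕜 : Type*} [NormedField 𝕜] {f : 𝕜 → 𝕜}

lemma one_isLittleO_id_cobounded : (1 : 𝕜 → 𝕜) =o[cobounded 𝕜] fun t ↦ t :=
  isLittleO_const_id_cobounded 1

lemma one_isBigO_of_id_isBigO (h : (fun t ↦ t) =O[cobounded 𝕜] f) :
    (1 : 𝕜 → 𝕜) =O[cobounded 𝕜] f :=
  one_isLittleO_id_cobounded.isBigO.trans h

lemma not_id_isBigO_one [(cobounded 𝕜).NeBot] :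
    ¬ (fun t : 𝕜 ↦ t) =O[cobounded 𝕜] (1 : 𝕜 → 𝕜) := fun h ↦
  isLittleO_irrefl (.of_forall fun _ ↦ one_ne_zero) (one_isLittleO_id_cobounded.trans_isBigO h)

lemma tendsto_zero_of_id_mul_isBigO_one
    (h : (fun t ↦ t * f t) =O[cobounded 𝕜] (1 : 𝕜 → 𝕜)) :
    Tendsto f (cobounded 𝕜) (𝓝 0) := by
  have hne : ∀ᶠ t in cobounded 𝕜, t ≠ 0 := eventually_ne_cobounded 0
  refine (isBigO_of_mul_right hne (h.congr' ?_ ?_)).trans_tendsto tendsto_inv₀_cobounded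
  · exact .of_forall fun t ↦ mul_comm _ _
  · exact hne.mono fun t ht ↦ (inv_mul_cancel₀ ht).symm

end Cobounded

section Polynomial

variable {𝕜 : Type*} [NormedField 𝕜]

lemma eventually_cobounded_eval_ne_zero {P : 𝕜[X]} (hP : P ≠ 0) :
    ∀ᶠ t in cobounded 𝕜, P.eval t ≠ 0 :=
  le_cofinite 𝕜 (eventually_cofinite_not_isRoot hP)

lemma id_mul_eval_isBigO_of_degree_lt {P Q : 𝕜[X]} (h : P.degree < Q.degree) :
    (fun t ↦ t * P.eval t) =O[cobounded 𝕜] fun t ↦ Q.eval t := by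
  have hdeg : (X * P).degree ≤ Q.degree := by
    rw [degree_mul, degree_X, add_comm]
    exact Nat.WithBot.add_one_le_of_lt h
  simpa using isBigO_cobounded_of_degree_le hdeg

lemma id_mul_eval_derivative_isBigO (P : 𝕜[X]) :
    (fun t ↦ t * P.derivative.eval t) =O[cobounded 𝕜] fun t ↦ P.eval t := by
  rcases eq_or_ne P 0 with rfl | hP
  · simpa using isBigO_refl (fun _ : 𝕜 ↦ (0 : 𝕜)) _
  · exact id_mul_eval_isBigO_of_degree_lt (degree_derivative_lt hP)

end Polynomial

section RationalFunction

lemma eventually_noPoleAt (f : RatFunc ℂ) : ∀ᶠ t in cobounded ℂ, NoPoleAt f t :=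
  eventually_cobounded_eval_ne_zero f.denom_ne_zero

lemma evR_mul_eval_denom {f : RatFunc ℂ} {t : ℂ} (ht : NoPoleAt f t) :
    evR f t * f.denom.eval t = f.num.eval t :=
  div_mul_cancel₀ _ ht

lemma evR_one : evR 1 = 1 := by
  ext t
  simp [evR]

lemma evR_isBigO_or_id_mul_isBigO (f g : RatFunc ℂ) :
    evR f =O[cobounded ℂ] evR g ∨ (fun t ↦ t * evR g t) =O[cobounded ℂ] evR f := by
  have hdenom : ∀ᶠ t in cobounded ℂ, (f.denom * g.denom).eval t ≠ 0 :=
    eventually_cobounded_eval_ne_zero (mul_ne_zero f.denom_ne_zero g.denom_ne_zero)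
  have hf : ∀ᶠ t in cobounded ℂ,
      (f.num * g.denom).eval t = evR f t * (f.denom * g.denom).eval t := by
    filter_upwards [eventually_noPoleAt f] with t ht
    rw [eval_mul, eval_mul, ← evR_mul_eval_denom ht, mul_assoc]
  have hg : ∀ᶠ t in cobounded ℂ,
      (g.num * f.denom).eval t = evR g t * (f.denom * g.denom).eval t := by
    filter_upwards [eventually_noPoleAt g] with t ht
    rw [eval_mul, eval_mul, ← evR_mul_eval_denom ht]
    ring
  rcases le_or_gt (f.num * g.denom).degree (g.num * f.denom).degree with h | h
  · exact .inl (isBigO_of_mul_right hdenom ((isBigO_cobounded_of_degree_le h).congr' hf hg))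
  · refine .inr (isBigO_of_mul_right hdenom ((id_mul_eval_isBigO_of_degree_lt h).congr' ?_ hf))
    filter_upwards [hg] with t ht
    rw [ht, mul_assoc]

lemma evR_isBigO_one_or_id_isBigO (f : RatFunc ℂ) :
    evR f =O[cobounded ℂ] (1 : ℂ → ℂ) ∨ (fun t ↦ t) =O[cobounded ℂ] evR f := by
  simpa [evR_one] using evR_isBigO_or_id_mul_isBigO f 1

lemma one_isBigO_evR_or_id_mul_isBigO_one (f : RatFunc ℂ) :
    (1 : ℂ → ℂ) =O[cobounded ℂ] evR f ∨ (fun t ↦ t * evR f t) =O[cobounded ℂ] (1 : ℂ → ℂ) := by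
  simpa only [evR_one] using evR_isBigO_or_id_mul_isBigO 1 f

lemma evR_isBigO_total (f g : RatFunc ℂ) :
    evR f =O[cobounded ℂ] evR g ∨ evR g =O[cobounded ℂ] evR f := by
  refine (evR_isBigO_or_id_mul_isBigO f g).imp_right fun h ↦ ?_
  simpa using ((one_isBigO_of_id_isBigO (isBigO_refl _ _)).mul (isBigO_refl (evR g) _)).trans h

lemma evR_isBigO_one_of_mul_self {f : RatFunc ℂ}
    (h : (fun t ↦ t) =O[cobounded ℂ] evR f →
      (fun t ↦ evR f t * evR f t) =O[cobounded ℂ] evR f) :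
    evR f =O[cobounded ℂ] (1 : ℂ → ℂ) :=
  (evR_isBigO_one_or_id_isBigO f).elim id fun hf ↦
    isBigO_one_of_mul_self
      (eventually_ne_zero_of_one_isBigO (one_isBigO_of_id_isBigO hf)) (h hf)

lemma deriv_evR {f : RatFunc ℂ} {t : ℂ} (ht : NoPoleAt f t) :
    deriv (evR f) t = (f.num.derivative.eval t * f.denom.eval t
      - f.num.eval t * f.denom.derivative.eval t) / f.denom.eval t ^ 2 :=
  ((f.num.hasDerivAt t).div (f.denom.hasDerivAt t) ht).deriv

lemma id_mul_deriv_evR_isBigO (f : RatFunc ℂ) (c : ℂ) :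
    (fun t ↦ t * deriv (evR f) t) =O[cobounded ℂ] fun t ↦ evR f t - c := by
  set P : ℂ[X] := f.num - C c * f.denom with hP
  have hwronskian : (fun t ↦ t * P.derivative.eval t * f.denom.eval t
      - P.eval t * (t * f.denom.derivative.eval t)) =O[cobounded ℂ]
        fun t ↦ P.eval t * f.denom.eval t :=
    ((id_mul_eval_derivative_isBigO P).mul (isBigO_refl _ _)).sub
      ((isBigO_refl _ _).mul (id_mul_eval_derivative_isBigO f.denom))
  refine isBigO_of_mul_right (k := fun t ↦ f.denom.eval t ^ 2)
    ((eventually_noPoleAt f).mono fun _ ht ↦ pow_ne_zero 2 ht) (hwronskian.congr' ?_ ?_)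
  · filter_upwards [eventually_noPoleAt f] with t ht
    have ht' : f.denom.eval t ≠ 0 := ht
    rw [deriv_evR ht, mul_assoc t (_ / _), div_mul_cancel₀ _ (pow_ne_zero 2 ht'), hP]
    simp only [derivative_sub, derivative_mul, derivative_C, eval_sub, eval_mul, eval_C, zero_mul,
      zero_add]
    ring
  · filter_upwards [eventually_noPoleAt f] with t ht
    simp only [hP, eval_sub, eval_mul, eval_C, ← evR_mul_eval_denom ht]
    ring

lemma id_mul_deriv_evR_isBigO_self (f : RatFunc ℂ) :
    (fun t ↦ t * deriv (evR f) t) =O[cobounded ℂ] evR f := by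
  simpa using id_mul_deriv_evR_isBigO f 0

lemma tendsto_id_mul_deriv_evR {f : RatFunc ℂ} {c : ℂ}
    (hf : Tendsto (evR f) (cobounded ℂ) (𝓝 c)) :
    Tendsto (fun t ↦ t * deriv (evR f) t) (cobounded ℂ) (𝓝 0) :=
  (id_mul_deriv_evR_isBigO f c).trans_tendsto (tendsto_sub_nhds_zero_iff.2 hf)

lemma exists_tendsto_evR {f : RatFunc ℂ} (hf : evR f =O[cobounded ℂ] (1 : ℂ → ℂ)) :
    ∃ c, Tendsto (evR f) (cobounded ℂ) (𝓝 c) := by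
  set Q := f.num / f.denom with hQ
  set R := f.num % f.denom with hR
  have hrem : Tendsto (fun t ↦ R.eval t / f.denom.eval t) (cobounded ℂ) (𝓝 0) :=
    (isLittleO_cobounded_of_degree_lt
      (degree_mod_lt f.num f.denom_ne_zero)).tendsto_div_nhds_zero
  have hsplit : ∀ᶠ t in cobounded ℂ, Q.eval t + R.eval t / f.denom.eval t = evR f t := by
    filter_upwards [eventually_noPoleAt f] with t ht
    have ht' : f.denom.eval t ≠ 0 := ht
    have hdiv : f.denom.eval t * Q.eval t + R.eval t = f.num.eval t := by
      rw [hQ, hR, ← eval_mul, ← eval_add, EuclideanDomain.div_add_mod]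
    rw [evR, ← hdiv]
    field_simp
  have hQ_bdd : (fun t ↦ Q.eval t) =O[cobounded ℂ] (1 : ℂ → ℂ) :=
    (hf.sub (hrem.isBigO_one ℂ)).congr' (hsplit.mono fun t ht ↦ sub_eq_of_eq_add ht.symm) .rfl
  have hQ_const : Q = C (Q.coeff 0) := by
    refine eq_C_of_degree_le_zero (le_of_not_gt fun hdeg ↦ not_id_isBigO_one (𝕜 := ℂ) ?_)
    have hid := id_mul_eval_isBigO_of_degree_lt (P := 1) (Q := Q) (by simpa using hdeg)
    exact (by simpa using hid : (fun t ↦ t) =O[cobounded ℂ] fun t ↦ Q.eval t).trans hQ_bdd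
  refine ⟨Q.coeff 0 + 0, (hrem.const_add (Q.coeff 0)).congr' ?_⟩
  filter_upwards [hsplit] with t ht
  rw [← ht, hQ_const, eval_C, coeff_C_zero]

end RationalFunction

namespace IsSasanoSol

variable {a0 a1 a3 : ℂ} {q1 p1 q2 p2 : RatFunc ℂ}

/-- The function `w = q1 p1 + q2 p2`. In terms of `w`, the equations for `(q1, p1)` involve
`(q2, p2)` only through the forcing term `t (4 p2 - 1)`, and the equation for `p1` is linear in
`p1`. -/
noncomputable def coupling (q1 p1 q2 p2 : RatFunc ℂ) (t : ℂ) : ℂ :=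
  evR q1 t * evR p1 t + evR q2 t * evR p2 t

lemma coupling_comm (q1 p1 q2 p2 : RatFunc ℂ) :
    coupling q2 p2 q1 p1 = coupling q1 p1 q2 p2 :=
  funext fun _ ↦ add_comm _ _

lemma swap (h : IsSasanoSol a0 a1 a3 q1 p1 q2 p2) : IsSasanoSol a1 a0 a3 q2 p2 q1 p1 := by
  intro t hq2 hp2 hq1 hp1
  obtain ⟨e1, e2, e3, e4⟩ := h t hq1 hp1 hq2 hp2
  exact ⟨by linear_combination e3, by linear_combination e4, by linear_combination e1,
    by linear_combination e2⟩

lemma eventually_id_mul_deriv_q1 (h : IsSasanoSol a0 a1 a3 q1 p1 q2 p2) :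
    ∀ᶠ t in cobounded ℂ, t * deriv (evR q1) t =
      evR q1 t * (2 * coupling q1 p1 q2 p2 t - evR q1 t + (a0 + a1 + a3))
        + t * (4 * evR p2 t - 1) := by
  filter_upwards [eventually_noPoleAt q1, eventually_noPoleAt p1, eventually_noPoleAt q2,
    eventually_noPoleAt p2] with t hq1 hp1 hq2 hp2
  rw [(h t hq1 hp1 hq2 hp2).1, coupling]
  ring

lemma eventually_id_mul_deriv_p1 (h : IsSasanoSol a0 a1 a3 q1 p1 q2 p2) :
    ∀ᶠ t in cobounded ℂ, t * deriv (evR p1) t =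
      (2 * (evR q1 t - coupling q1 p1 q2 p2 t) - (a0 + a1 + a3)) * evR p1 t + a0 := by
  filter_upwards [eventually_noPoleAt q1, eventually_noPoleAt p1, eventually_noPoleAt q2,
    eventually_noPoleAt p2] with t hq1 hp1 hq2 hp2
  rw [(h t hq1 hp1 hq2 hp2).2.1, coupling]
  ring

lemma coupling_sub_q1_isBigO_one (h : IsSasanoSol a0 a1 a3 q1 p1 q2 p2)
    (hp1 : (1 : ℂ → ℂ) =O[cobounded ℂ] evR p1) :
    (fun t ↦ coupling q1 p1 q2 p2 t - evR q1 t) =O[cobounded ℂ] (1 : ℂ → ℂ) := by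
  refine isBigO_one_of_mul_self (eventually_ne_zero_of_one_isBigO hp1) ?_
  have hbound := (((hp1.const_mul_left a0).sub (id_mul_deriv_evR_isBigO_self p1)).sub
    ((isBigO_refl (evR p1) _).const_mul_left (a0 + a1 + a3))).const_mul_left (1 / 2)
  refine hbound.congr' ?_ .rfl
  filter_upwards [h.eventually_id_mul_deriv_p1] with t ht
  rw [ht, Pi.one_apply]
  ring

lemma id_mul_four_p2_sub_one_isBigO_one (h : IsSasanoSol a0 a1 a3 q1 p1 q2 p2)
    (hq1 : evR q1 =O[cobounded ℂ] (1 : ℂ → ℂ))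
    (hw : coupling q1 p1 q2 p2 =O[cobounded ℂ] (1 : ℂ → ℂ)) :
    (fun t ↦ t * (4 * evR p2 t - 1)) =O[cobounded ℂ] (1 : ℂ → ℂ) := by
  have hs : (fun _ ↦ a0 + a1 + a3) =O[cobounded ℂ] (1 : ℂ → ℂ) :=
    isBigO_const_const _ one_ne_zero _
  have hprod :
      (fun t ↦ evR q1 t * (2 * coupling q1 p1 q2 p2 t - evR q1 t + (a0 + a1 + a3)))
        =O[cobounded ℂ] (1 : ℂ → ℂ) :=
    (hq1.mul (((hw.const_mul_left 2).sub hq1).add hs)).congr_right fun _ ↦ mul_one _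
  refine (((id_mul_deriv_evR_isBigO_self q1).trans hq1).sub hprod).congr' ?_ .rfl
  filter_upwards [h.eventually_id_mul_deriv_q1] with t ht
  rw [ht]
  ring

lemma not_id_mul_p2_isBigO_one_of_isBigO_one (h : IsSasanoSol a0 a1 a3 q1 p1 q2 p2)
    (hq1 : evR q1 =O[cobounded ℂ] (1 : ℂ → ℂ))
    (hw : coupling q1 p1 q2 p2 =O[cobounded ℂ] (1 : ℂ → ℂ)) :
    ¬ (fun t ↦ t * evR p2 t) =O[cobounded ℂ] (1 : ℂ → ℂ) := fun hp2 ↦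
  not_id_isBigO_one <| ((hp2.const_mul_left 4).sub
    (h.id_mul_four_p2_sub_one_isBigO_one hq1 hw)).congr_left fun t ↦ by ring

lemma four_id_mul_p2_add_mul_isBigO_q1 (h : IsSasanoSol a0 a1 a3 q1 p1 q2 p2)
    (hq1 : (fun t ↦ t) =O[cobounded ℂ] evR q1) :
    (fun t ↦ 4 * (t * evR p2 t) + (2 * coupling q1 p1 q2 p2 t - evR q1 t) * evR q1 t)
      =O[cobounded ℂ] evR q1 := by
  refine (((id_mul_deriv_evR_isBigO_self q1).add hq1).sub
    ((isBigO_refl (evR q1) _).const_mul_left (a0 + a1 + a3))).congr' ?_ .rfl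
  filter_upwards [h.eventually_id_mul_deriv_q1] with t ht
  rw [ht]
  ring

lemma two_mul_coupling_sub_q1_isBigO_one (h : IsSasanoSol a0 a1 a3 q1 p1 q2 p2)
    (hp2 : (fun t ↦ t * evR p2 t) =O[cobounded ℂ] (1 : ℂ → ℂ))
    (hq1 : (fun t ↦ t) =O[cobounded ℂ] evR q1) :
    (fun t ↦ 2 * coupling q1 p1 q2 p2 t - evR q1 t) =O[cobounded ℂ] (1 : ℂ → ℂ) := by
  have hone : (1 : ℂ → ℂ) =O[cobounded ℂ] evR q1 := one_isBigO_of_id_isBigO hq1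
  refine isBigO_one_of_mul_self (eventually_ne_zero_of_one_isBigO hone) ?_
  exact ((h.four_id_mul_p2_add_mul_isBigO_q1 hq1).sub
    ((hp2.const_mul_left 4).trans hone)).congr_left fun t ↦ by ring

lemma not_id_mul_p2_isBigO_one_of_one_isBigO_p1 (h : IsSasanoSol a0 a1 a3 q1 p1 q2 p2)
    (hp1 : (1 : ℂ → ℂ) =O[cobounded ℂ] evR p1) :
    ¬ (fun t ↦ t * evR p2 t) =O[cobounded ℂ] (1 : ℂ → ℂ) := by
  intro hp2
  have hwq := h.coupling_sub_q1_isBigO_one hp1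
  have hq1 : evR q1 =O[cobounded ℂ] (1 : ℂ → ℂ) :=
    (evR_isBigO_one_or_id_isBigO q1).elim id fun hunb ↦
      ((h.two_mul_coupling_sub_q1_isBigO_one hp2 hunb).sub
        (hwq.const_mul_left 2)).congr_left fun t ↦ by ring
  exact h.not_id_mul_p2_isBigO_one_of_isBigO_one hq1
    ((hwq.add hq1).congr_left fun t ↦ by ring) hp2

lemma not_id_mul_p_isBigO_one_of_q2_isBigO_q1 (h : IsSasanoSol a0 a1 a3 q1 p1 q2 p2)
    (hq : evR q2 =O[cobounded ℂ] evR q1)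
    (hp1 : (fun t ↦ t * evR p1 t) =O[cobounded ℂ] (1 : ℂ → ℂ)) :
    ¬ (fun t ↦ t * evR p2 t) =O[cobounded ℂ] (1 : ℂ → ℂ) := by
  intro hp2
  have htw : (fun t ↦ t * coupling q1 p1 q2 p2 t) =O[cobounded ℂ] evR q1 := by
    refine (((isBigO_refl (evR q1) _).mul hp1).add (hq.mul hp2)).congr (fun t ↦ ?_)
      fun t ↦ mul_one _
    rw [coupling]
    ring
  rcases evR_isBigO_one_or_id_isBigO q1 with hbdd | hunb
  · exact h.not_id_mul_p2_isBigO_one_of_isBigO_one hbdd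
      ((tendsto_zero_of_id_mul_isBigO_one (htw.trans hbdd)).isBigO_one ℂ) hp2
  · have hmul : (fun t ↦ t * (2 * coupling q1 p1 q2 p2 t - evR q1 t)) =O[cobounded ℂ] evR q1 :=
      (hunb.mul (h.two_mul_coupling_sub_q1_isBigO_one hp2 hunb)).congr_right fun _ ↦ mul_one _
    have hne := eventually_ne_zero_of_one_isBigO (one_isBigO_of_id_isBigO hunb)
    exact not_id_isBigO_one (isBigO_one_of_mul_self hne
      (((htw.const_mul_left 2).sub hmul).congr_left fun t ↦ by ring))

lemma one_isBigO_p1 (h : IsSasanoSol a0 a1 a3 q1 p1 q2 p2) :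
    (1 : ℂ → ℂ) =O[cobounded ℂ] evR p1 := by
  refine (one_isBigO_evR_or_id_mul_isBigO_one p1).resolve_right fun hp1 ↦ ?_
  rcases one_isBigO_evR_or_id_mul_isBigO_one p2 with hp2 | hp2
  · exact h.swap.not_id_mul_p2_isBigO_one_of_one_isBigO_p1 hp2 hp1
  · rcases evR_isBigO_total q2 q1 with hq | hq
    · exact h.not_id_mul_p_isBigO_one_of_q2_isBigO_q1 hq hp1 hp2
    · exact h.swap.not_id_mul_p_isBigO_one_of_q2_isBigO_q1 hq hp2 hp1

lemma q2_sub_q1_isBigO_one (h : IsSasanoSol a0 a1 a3 q1 p1 q2 p2) :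
    (fun t ↦ evR q2 t - evR q1 t) =O[cobounded ℂ] (1 : ℂ → ℂ) := by
  have hw2 := h.swap.coupling_sub_q1_isBigO_one h.swap.one_isBigO_p1
  rw [coupling_comm] at hw2
  exact ((h.coupling_sub_q1_isBigO_one h.one_isBigO_p1).sub hw2).congr_left fun t ↦ by ring

lemma four_id_mul_p2_add_sq_isBigO_q1 (h : IsSasanoSol a0 a1 a3 q1 p1 q2 p2)
    (hq1 : (fun t ↦ t) =O[cobounded ℂ] evR q1) :
    (fun t ↦ 4 * (t * evR p2 t) + evR q1 t ^ 2) =O[cobounded ℂ] evR q1 := by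
  have hwq : (fun t ↦ (coupling q1 p1 q2 p2 t - evR q1 t) * evR q1 t) =O[cobounded ℂ] evR q1 := by
    simpa using (h.coupling_sub_q1_isBigO_one h.one_isBigO_p1).mul (isBigO_refl (evR q1) _)
  exact ((h.four_id_mul_p2_add_mul_isBigO_q1 hq1).sub
    (hwq.const_mul_left 2)).congr_left fun t ↦ by ring

/- If `q1` were unbounded, then `w`, `q1` and `q2` would agree up to `O(1)`, and `4 t p1`, `4 t p2`
would agree with `-q1²` up to `O(q1)`. So `4 t w`, being `O(t q1) = O(q1²)`, would be
`-2 q1³ + O(q1²)`. -/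
lemma q1_isBigO_one (h : IsSasanoSol a0 a1 a3 q1 p1 q2 p2) :
    evR q1 =O[cobounded ℂ] (1 : ℂ → ℂ) := by
  refine evR_isBigO_one_of_mul_self fun hq1 ↦ ?_
  have hone : (1 : ℂ → ℂ) =O[cobounded ℂ] evR q1 := one_isBigO_of_id_isBigO hq1
  have hdiff := h.q2_sub_q1_isBigO_one
  have hq21 : evR q2 =O[cobounded ℂ] evR q1 :=
    ((hdiff.trans hone).add (isBigO_refl (evR q1) _)).congr_left fun t ↦ by ring
  have hq2 : (fun t ↦ t) =O[cobounded ℂ] evR q2 :=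
    (evR_isBigO_one_or_id_isBigO q2).resolve_left fun hbdd ↦
      not_id_isBigO_one (hq1.trans ((hbdd.sub hdiff).congr_left fun t ↦ by ring))
  have hw : coupling q1 p1 q2 p2 =O[cobounded ℂ] evR q1 :=
    (((h.coupling_sub_q1_isBigO_one h.one_isBigO_p1).trans hone).add
      (isBigO_refl (evR q1) _)).congr_left fun t ↦ by ring
  have hprod : (fun t ↦ evR q2 t * (evR q1 t + evR q2 t) * evR q1 t) =O[cobounded ℂ]
      fun t ↦ evR q1 t * evR q1 t := by
    have hp2 := hq21.mul (h.four_id_mul_p2_add_sq_isBigO_q1 hq1)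
    have hp1 := (isBigO_refl (evR q1) _).mul
      ((h.swap.four_id_mul_p2_add_sq_isBigO_q1 hq2).trans hq21)
    refine ((hp1.add hp2).sub ((hq1.mul hw).const_mul_left 4)).congr_left fun t ↦ ?_
    rw [coupling]
    ring
  have hsum : (fun t ↦ evR q2 t * (evR q1 t + evR q2 t)) =O[cobounded ℂ] evR q1 :=
    isBigO_of_mul_right (eventually_ne_zero_of_one_isBigO hone) hprod
  have hcorr : (fun t ↦ (evR q2 t - evR q1 t) * (2 * evR q1 t + evR q2 t)) =O[cobounded ℂ]
      evR q1 := by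
    simpa using hdiff.mul (((isBigO_refl (evR q1) _).const_mul_left 2).add hq21)
  exact ((hsum.sub hcorr).const_mul_left (1 / 2)).congr_left fun t ↦ by ring

lemma coupling_isBigO_one (h : IsSasanoSol a0 a1 a3 q1 p1 q2 p2) :
    coupling q1 p1 q2 p2 =O[cobounded ℂ] (1 : ℂ → ℂ) :=
  ((h.coupling_sub_q1_isBigO_one h.one_isBigO_p1).add h.q1_isBigO_one).congr_left
    fun t ↦ by ring

lemma tendsto_p2 (h : IsSasanoSol a0 a1 a3 q1 p1 q2 p2) :
    Tendsto (evR p2) (cobounded ℂ) (𝓝 (1 / 4)) := by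
  have hlim : Tendsto (fun t ↦ 4 * evR p2 t - 1) (cobounded ℂ) (𝓝 0) :=
    tendsto_zero_of_id_mul_isBigO_one
      (h.id_mul_four_p2_sub_one_isBigO_one h.q1_isBigO_one h.coupling_isBigO_one)
  convert (hlim.add_const 1).const_mul (1 / 4) using 2 <;> ring

lemma tendsto_coupling (h : IsSasanoSol a0 a1 a3 q1 p1 q2 p2) {b1 b2 : ℂ}
    (hq1 : Tendsto (evR q1) (cobounded ℂ) (𝓝 b1)) (hq2 : Tendsto (evR q2) (cobounded ℂ) (𝓝 b2)) :
    Tendsto (coupling q1 p1 q2 p2) (cobounded ℂ) (𝓝 ((b1 + b2) / 4)) := by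
  convert (hq1.mul h.swap.tendsto_p2).add (hq2.mul h.tendsto_p2) using 2
  · rw [coupling]
  · ring

lemma three_mul_sub_of_tendsto (h : IsSasanoSol a0 a1 a3 q1 p1 q2 p2) {b1 b2 : ℂ}
    (hq1 : Tendsto (evR q1) (cobounded ℂ) (𝓝 b1)) (hq2 : Tendsto (evR q2) (cobounded ℂ) (𝓝 b2)) :
    3 * b1 - b2 = 2 * (a0 + a1 + a3) - 8 * a0 := by
  have hp1 := h.swap.tendsto_p2
  have hrhs := (((((hq1.sub (h.tendsto_coupling hq1 hq2)).const_mul 2).sub_const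
    (a0 + a1 + a3)).mul hp1).add_const a0).congr'
      (h.eventually_id_mul_deriv_p1.mono fun t ht ↦ ht.symm)
  linear_combination 8 * tendsto_nhds_unique hrhs (tendsto_id_mul_deriv_evR hp1)

lemma tendsto_q1 (h : IsSasanoSol a0 a1 a3 q1 p1 q2 p2) :
    Tendsto (evR q1) (cobounded ℂ) (𝓝 (-2 * a0 + a3)) := by
  obtain ⟨b1, hb1⟩ := exists_tendsto_evR h.q1_isBigO_one
  obtain ⟨b2, hb2⟩ := exists_tendsto_evR h.swap.q1_isBigO_one
  convert hb1 using 2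
  linear_combination (-3 / 8) * h.three_mul_sub_of_tendsto hb1 hb2
    - (1 / 8) * h.swap.three_mul_sub_of_tendsto hb2 hb1

lemma tendsto_id_mul_p2_sub (h : IsSasanoSol a0 a1 a3 q1 p1 q2 p2) :
    Tendsto (fun t ↦ t * (evR p2 t - 1 / 4)) (cobounded ℂ)
      (𝓝 ((-2 * a0 + a3) * (-2 * a0 - a3) / 4)) := by
  have hq1 := h.tendsto_q1
  have hw := h.tendsto_coupling hq1 h.swap.tendsto_q1
  have hlim := ((tendsto_id_mul_deriv_evR hq1).sub
    (hq1.mul (((hw.const_mul 2).sub hq1).add_const (a0 + a1 + a3)))).const_mul (1 / 4)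
  convert hlim.congr' ?_ using 2
  · ring
  · filter_upwards [h.eventually_id_mul_deriv_q1] with t ht
    rw [ht]
    ring

end IsSasanoSol

theorem sasano_limits_at_infinity (a0 a1 a2 a3 : ℂ)
    (hpar : a0 + a1 + 2 * a2 + a3 = 1 / 2)
    (q1 p1 q2 p2 : RatFunc ℂ)
    (hsol : IsSasanoSol a0 a1 a3 q1 p1 q2 p2) :
    Tendsto (evR q1) (cocompact ℂ) (𝓝 (-2 * a0 + a3)) ∧
    Tendsto (evR p1) (cocompact ℂ) (𝓝 (1 / 4)) ∧
    Tendsto (evR q2) (cocompact ℂ) (𝓝 (-2 * a1 + a3)) ∧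
    Tendsto (evR p2) (cocompact ℂ) (𝓝 (1 / 4)) ∧
    Tendsto (fun t : ℂ => t * (evR p1 t - 1 / 4)) (cocompact ℂ)
      (𝓝 ((-2 * a1 + a3) * (-2 * a1 - a3) / 4)) ∧
    Tendsto (fun t : ℂ => t * (evR p2 t - 1 / 4)) (cocompact ℂ)
      (𝓝 ((-2 * a0 + a3) * (-2 * a0 - a3) / 4)) := by
  rw [← Metric.cobounded_eq_cocompact]
  exact ⟨hsol.tendsto_q1, hsol.swap.tendsto_p2, hsol.swap.tendsto_q1, hsol.tendsto_p2,
    hsol.swap.tendsto_id_mul_p2_sub, hsol.tendsto_id_mul_p2_sub⟩
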